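/- For each η ∈ Ω there exists a unique subset J_η ⊆ Λ_{3,n} such that {A_nβ : β ∈ J_η} = T′_η. Moreover |J_η| = λ_{2,n} and det L^c_{J_η} ≠ 0, i.e. J_η ∈ S_{A_n}. -/

import Mathlib

open Finset

/-- `Λ_{2,n}`: pairs `α ∈ ℕ²` with `1 ≤ α₁ + α₂ ≤ n`. -/
def Lam2 (n : ℕ) : Finset (ℕ × ℕ) :=
  ((range (n+1)) ×ˢ (range (n+1))).filter (fun α => 1 ≤ α.1 + α.2 ∧ α.1 + α.2 ≤ n)

/-- `v̄ ∈ ℂ^{Λ_{2,n}}`, with `α`-coordinate `C(v₁,α₁)·C(v₂,α₂)`. -/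
noncomputable def vbar (n : ℕ) (v : ℕ × ℕ) : (Lam2 n) → ℂ :=
  fun α => ((v.1.choose α.1.1 * v.2.choose α.1.2 : ℕ) : ℂ)

/-- `Λ_{3,n}`: triples `β ∈ ℕ³` with `1 ≤ β₁ + β₂ + β₃ ≤ n`. -/
def Lam3 (n : ℕ) : Finset (ℕ × ℕ × ℕ) :=
  ((range (n+1)) ×ˢ (range (n+1)) ×ˢ (range (n+1))).filter
    (fun β => 1 ≤ β.1 + β.2.1 + β.2.2 ∧ β.1 + β.2.1 + β.2.2 ≤ n)

/-- The linear map `A_n : ℕ³ → ℕ²` with matrix rows `(1,1,n)` and `(0,1,n+1)`. -/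
def Amap (n : ℕ) (β : ℕ × ℕ × ℕ) : ℕ × ℕ :=
  (β.1 + β.2.1 + n * β.2.2, β.2.1 + (n+1) * β.2.2)

/-- `c_β = Σ_{γ ≤ β} (−1)^{|β−γ|} C(β,γ) (A_nγ)‾`. -/
noncomputable def cvec (n : ℕ) (β : ℕ × ℕ × ℕ) : (Lam2 n) → ℂ :=
  ∑ γ ∈ (range (β.1+1)) ×ˢ (range (β.2.1+1)) ×ˢ (range (β.2.2+1)),
    (((-1 : ℂ) ^ ((β.1 + β.2.1 + β.2.2) - (γ.1 + γ.2.1 + γ.2.2))) *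
      ((β.1.choose γ.1 * β.2.1.choose γ.2.1 * β.2.2.choose γ.2.2 : ℕ) : ℂ)) •
      vbar n (Amap n γ)

/-- `J ∈ S_{A_n}`: `J ⊆ Λ_{3,n}`, `|J| = λ_{2,n}`, `det L^c_J ≠ 0`. -/
def memSA (n : ℕ) (J : Finset (ℕ × ℕ × ℕ)) : Prop :=
  J ⊆ Lam3 n ∧ J.card = (Lam2 n).card ∧
    ∀ e : (Lam2 n) ≃ J,
      (Matrix.of fun i j : (Lam2 n) => cvec n (e i).1 j).det ≠ 0

/-- `m_J = Σ_{β ∈ J} A_nβ`. -/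
def mJ (n : ℕ) (J : Finset (ℕ × ℕ × ℕ)) : ℕ × ℕ := ∑ β ∈ J, Amap n β

/-- `f_k(v) = k·v₁ + (1−k)·v₂`. -/
def fk (k : ℕ) (v : ℕ × ℕ) : ℤ := (k : ℤ) * v.1 + (1 - (k : ℤ)) * v.2

/-- Data of a sequence `η = (z, d₀, d₁, …, d_r)`. -/
structure OmegaData where
  r : ℕ
  z : Bool
  d : ℕ → ℕ

/-- `η ∈ Ω`: `d₀ = 0`, `d_i ≥ 1` for `1 ≤ i ≤ r` (and `d_i = 0` beyond `r`),
and `d₀ + ⋯ + d_r = n`. -/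
def OmegaData.IsOmega (n : ℕ) (η : OmegaData) : Prop :=
  η.d 0 = 0 ∧ (∀ i, 1 ≤ i → i ≤ η.r → 1 ≤ η.d i) ∧
  (∀ i, η.r < i → η.d i = 0) ∧
  (∑ i ∈ range (η.r + 1), η.d i) = n

/-- The unique `t` with `Σ_{i=0}^{t−1} d_i < j ≤ Σ_{i=0}^{t} d_i`. -/
noncomputable def tIdx (η : OmegaData) (j : ℕ) : ℕ :=
  sInf {t | j ≤ ∑ i ∈ range (t+1), η.d i}

/-- The vector `v_{j,η} ∈ ℕ²`. -/
noncomputable def vvec (η : OmegaData) (j : ℕ) : ℕ × ℕ :=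
  let t := tIdx η j
  let c := j - ∑ i ∈ range t, η.d i
  let a := (∑ i ∈ range t, if (Odd i ↔ Odd t) then η.d i else 0) + c
  if (η.z = true) ↔ Odd t then (a, 0) else (0, a)

/-- `T_{j,η}` for `1 ≤ j ≤ n`, and `T_{0,η} = {(1,1),…,(n,n)}`. -/
noncomputable def Tj (n : ℕ) (η : OmegaData) (j : ℕ) : Finset (ℕ × ℕ) :=
  if j = 0 then (range n).image (fun q => (q+1, q+1))
  else (range (n - j + 1)).image (fun p => vvec η j + (p, p))

/-- `T_η = ⋃_{j=0}^{n} T_{j,η}`. -/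
noncomputable def Tset (n : ℕ) (η : OmegaData) : Finset (ℕ × ℕ) :=
  (range (n+1)).biUnion (fun j => Tj n η j)

/-- `r_{i,η} = n·π₂(v_{i,η})`. -/
noncomputable def rshift (n : ℕ) (η : OmegaData) (i : ℕ) : ℕ := n * (vvec η i).2

/-- `T'_η = T_{0,η} ∪ ⋃_{i=1}^{n} (T_{i,η} + r_{i,η})`. -/
noncomputable def Tset' (n : ℕ) (η : OmegaData) : Finset (ℕ × ℕ) :=
  Tj n η 0 ∪ (Finset.Icc 1 n).biUnion
    (fun i => (Tj n η i).image (fun v => v + (rshift n η i, rshift n η i)))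

/-- `J_η`: the (unique) subset of `Λ_{3,n}` with `A_n(J_η) = T'_η`. -/
noncomputable def Jset (n : ℕ) (η : OmegaData) : Finset (ℕ × ℕ × ℕ) :=
  (Lam3 n).filter (fun β => Amap n β ∈ Tset' n η)

/-- `z_k = 1` iff `f_k((1,0)) ≤ f_k((n,n+1))`. -/
def zk (n k : ℕ) : Bool := decide (fk k (1, 0) ≤ fk k (n, n+1))

/-- `t_l` in the recursive definition of `η_k`, where `O`, `E` are the odd- and
even-indexed partial sums `Σ_{j<l, j odd} d_{k,j}` and `Σ_{j<l, j even} d_{k,j}`. -/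
noncomputable def tval (n k : ℕ) (l O E : ℕ) : ℕ :=
  let w := (if Odd l then E else O) + 1
  if ((zk n k = true) ↔ Odd l) then
    sSup {m : ℕ | (m : ℤ) * fk k (1, 0) ≤ fk k (w * n, w * (n+1))}
  else
    sSup {m : ℕ | (m : ℤ) * fk k (n, n+1) ≤ fk k (w, 0)}

/-- The pair `(Σ_{j≤l, j odd} d_{k,j}, Σ_{j≤l, j even} d_{k,j})` of the recursion
defining `η_k`. -/
noncomputable def oeSums (n k : ℕ) : ℕ → ℕ × ℕ
  | 0 => (0, 0)
  | l + 1 =>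
    let p := oeSums n k l
    let O := p.1
    let E := p.2
    let S := O + E
    let dnext := if S < n then
        min (n - S) (tval n k (l+1) O E - (if Odd (l+1) then O else E))
      else 0
    if Odd (l+1) then (O + dnext, E) else (O, E + dnext)

/-- `d_{k,l}`. -/
noncomputable def dk (n k : ℕ) : ℕ → ℕ
  | 0 => 0
  | l + 1 =>
    let p := oeSums n k l
    let O := p.1
    let E := p.2
    let S := O + E
    if S < n then
      min (n - S) (tval n k (l+1) O E - (if Odd (l+1) then O else E))
    else 0

/-- `η_k = (z_k, d_{k,0}, …, d_{k,r})`, where `r` is the first index with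
`Σ_{j=0}^{r} d_{k,j} = n`. -/
noncomputable def etak (n k : ℕ) : OmegaData :=
  { r := sInf {r | ∑ j ∈ range (r+1), dk n k j = n},
    z := zk n k,
    d := dk n k }

/-!
If `x ^ i * y ^ j = 0` whenever `i + j > n`, then the binomial theorem identifies `c_β` with the
coefficient vector of
`x ^ β₁ * ((1 + x) * (1 + y) - 1) ^ β₂ * ((1 + x) ^ n * (1 + y) ^ (n + 1) - 1) ^ β₃` in the
monomials `x ^ α₁ * y ^ α₂`, so it suffices to prove these products independent for `β ∈ J_η`.
Take `x` and `w = (1 + x) * (1 + y) - 1` as coordinates, so that `1 + y = (1 + w) / (1 + x)`. The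
second factor is `w` and the third is congruent to `-x / (1 + x)` modulo `w`. Since `J_η` consists
of the `(a, p, b)` with `(a, b) = v_{j,η}` and `j + p ≤ n`, comparing powers of `w` one after the
other leaves the independence of `x ^ a * (-x / (1 + x)) ^ b` modulo `x ^ (m + 1)`, where `(a, b)`
runs over `v_{0,η} = 0, v_{1,η}, …, v_{m,η}`. These points form a hook
`{(a, 0) : a ≤ A} ∪ {(0, b) : b ≤ B}` with `A + B = m`, and independence is the uniqueness of
partial fractions with pole at `-1`: the numerator has degree at most `A + B`.
-/

open scoped Polynomial PowerSeries

theorem mem_Lam2 {n : ℕ} {α : ℕ × ℕ} : α ∈ Lam2 n ↔ 1 ≤ α.1 + α.2 ∧ α.1 + α.2 ≤ n := by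
  simp only [Lam2, mem_filter, mem_product, mem_range]
  omega

theorem mem_insert_zero_Lam2 {n : ℕ} {α : ℕ × ℕ} :
    α ∈ insert 0 (Lam2 n) ↔ α.1 + α.2 ≤ n := by
  rw [mem_insert, mem_Lam2, Prod.ext_iff, Prod.fst_zero, Prod.snd_zero]
  omega

theorem zero_notMem_Lam2 (n : ℕ) : (0 : ℕ × ℕ) ∉ Lam2 n := by
  simp [mem_Lam2]

theorem mem_Lam3 {n : ℕ} {β : ℕ × ℕ × ℕ} :
    β ∈ Lam3 n ↔ 1 ≤ β.1 + β.2.1 + β.2.2 ∧ β.1 + β.2.1 + β.2.2 ≤ n := by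
  simp only [Lam3, mem_filter, mem_product, mem_range]
  omega

theorem Amap_injOn (n : ℕ) : Set.InjOn (Amap n) (Lam3 n) := by
  rintro ⟨a, b, c⟩ h ⟨a', b', c'⟩ h' e
  simp only [mem_coe, mem_Lam3] at h h'
  obtain ⟨e₁, e₂⟩ : a + b + n * c = a' + b' + n * c' ∧ b + (n + 1) * c = b' + (n + 1) * c' :=
    Prod.ext_iff.1 e
  have hc : c = c' := by
    have := congrArg (· / (n + 1)) e₂
    rwa [Nat.add_mul_div_left _ _ n.succ_pos, Nat.add_mul_div_left _ _ n.succ_pos,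
      Nat.div_eq_of_lt (by omega), Nat.div_eq_of_lt (by omega), zero_add, zero_add] at this
  subst hc
  simp only [Prod.mk.injEq, and_true]
  omega

section MixedDiff

variable (R : Type*) [CommRing R]

/-- The mixed forward difference `Σ_{γ ≤ β} (−1)^{|β−γ|} C(β,γ) φ(γ)` of order `β` at the origin
of a function `φ` on `ℕ³`; the vector `c_β` is the case `φ γ = (A_nγ)‾`. -/
def mixedDiff {M : Type*} [AddCommGroup M] [Module R M] (β : ℕ × ℕ × ℕ) (φ : ℕ × ℕ × ℕ → M) : M :=
  ∑ γ ∈ range (β.1 + 1) ×ˢ range (β.2.1 + 1) ×ˢ range (β.2.2 + 1),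
    ((-1 : R) ^ ((β.1 + β.2.1 + β.2.2) - (γ.1 + γ.2.1 + γ.2.2)) *
      ((β.1.choose γ.1 * β.2.1.choose γ.2.1 * β.2.2.choose γ.2.2 : ℕ) : R)) • φ γ

theorem cvec_eq_mixedDiff (n : ℕ) (β : ℕ × ℕ × ℕ) :
    cvec n β = mixedDiff ℂ β fun γ => vbar n (Amap n γ) :=
  rfl

variable {R}

theorem map_mixedDiff {M M' : Type*} [AddCommGroup M] [Module R M] [AddCommGroup M'] [Module R M']
    (L : M →ₗ[R] M') (β : ℕ × ℕ × ℕ) (φ : ℕ × ℕ × ℕ → M) :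
    L (mixedDiff R β φ) = mixedDiff R β fun γ => L (φ γ) := by
  simp only [mixedDiff, map_sum, map_smul]

variable {S : Type*} [CommRing S] [Algebra R S]

theorem sub_one_pow_eq_sum_smul (u : S) (b : ℕ) :
    (u - 1) ^ b = ∑ k ∈ range (b + 1), ((-1 : R) ^ (b - k) * (b.choose k : R)) • u ^ k := by
  rw [sub_eq_add_neg, add_pow]
  refine sum_congr rfl fun k _ => ?_
  simp only [Algebra.smul_def, map_mul, map_pow, map_neg, map_one, map_natCast]
  ring

theorem mixedDiff_pow (u : S × S × S) (β : ℕ × ℕ × ℕ) :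
    mixedDiff R β (fun γ => u.1 ^ γ.1 * u.2.1 ^ γ.2.1 * u.2.2 ^ γ.2.2) =
      (u.1 - 1) ^ β.1 * (u.2.1 - 1) ^ β.2.1 * (u.2.2 - 1) ^ β.2.2 := by
  obtain ⟨a, b, c⟩ := β
  simp only [sub_one_pow_eq_sum_smul (R := R)]
  rw [mul_assoc, sum_mul_sum (range (b + 1)), ← sum_product', sum_mul_sum, ← sum_product']
  refine sum_congr rfl fun ⟨a', b', c'⟩ hγ => ?_
  simp only [mem_product, mem_range] at hγ
  have hsign : a + b + c - (a' + b' + c') = (a - a') + (b - b') + (c - c') := by omega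
  simp only [hsign, pow_add, Nat.cast_mul, smul_mul_smul_comm]
  congr 1 <;> ring

theorem mixedDiff_one {β : ℕ × ℕ × ℕ} (hβ : β ≠ 0) :
    mixedDiff R β (fun _ => (1 : S)) = 0 := by
  have h := mixedDiff_pow (R := R) (1 : S × S × S) β
  simp only [Prod.fst_one, Prod.snd_one, one_pow, mul_one, sub_self] at h
  rw [h, ← pow_add, ← pow_add, zero_pow]
  contrapose! hβ
  simp only [Prod.ext_iff, Prod.fst_zero, Prod.snd_zero]
  omega

theorem pow_Amap (u w : S) (n : ℕ) (γ : ℕ × ℕ × ℕ) :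
    u ^ (Amap n γ).1 * w ^ (Amap n γ).2 =
      u ^ γ.1 * (u * w) ^ γ.2.1 * (u ^ n * w ^ (n + 1)) ^ γ.2.2 := by
  simp only [Amap, pow_add, pow_mul, mul_pow]
  ring

end MixedDiff

section Expansion

variable {S : Type*} [CommRing S] [Algebra ℂ S] {n : ℕ} {x y : S}

theorem sum_vbar_smul (hxy : ∀ i j, n < i + j → x ^ i * y ^ j = 0) (v : ℕ × ℕ) :
    ∑ α : Lam2 n, vbar n v α • (x ^ α.1.1 * y ^ α.1.2) = (1 + x) ^ v.1 * (1 + y) ^ v.2 - 1 := by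
  set F : ℕ × ℕ → S := fun α =>
    ((v.1.choose α.1 * v.2.choose α.2 : ℕ) : ℂ) • (x ^ α.1 * y ^ α.2) with hF
  have binomial : (1 + x) ^ v.1 * (1 + y) ^ v.2 =
      ∑ α ∈ range (v.1 + 1) ×ˢ range (v.2 + 1), F α := by
    rw [add_comm 1 x, add_comm 1 y, add_pow, add_pow, sum_mul_sum, ← sum_product']
    refine sum_congr rfl fun α _ => ?_
    simp only [hF, one_pow, mul_one, Nat.cast_smul_eq_nsmul, nsmul_eq_mul]
    push_cast
    ring
  have truncate : ∑ α ∈ range (v.1 + 1) ×ˢ range (v.2 + 1), F α = ∑ α ∈ insert 0 (Lam2 n), F α := by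
    refine sum_congr_of_eq_on_inter (fun α _ hα => ?_) (fun α _ hα => ?_) fun _ _ _ => rfl
    · rw [mem_insert_zero_Lam2, not_le] at hα
      simp [hF, hxy _ _ hα]
    · have : v.1.choose α.1 * v.2.choose α.2 = 0 := by
        rw [mul_eq_zero, Nat.choose_eq_zero_iff, Nat.choose_eq_zero_iff]
        simp only [mem_product, mem_range] at hα
        omega
      simp only [hF, this, Nat.cast_zero, zero_smul]
  have hF0 : F 0 = 1 := by simp [hF]
  rw [binomial, truncate, sum_insert (zero_notMem_Lam2 n), hF0, add_sub_cancel_left]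
  exact sum_coe_sort (Lam2 n) F

theorem sum_cvec_smul (hxy : ∀ i j, n < i + j → x ^ i * y ^ j = 0) {β : ℕ × ℕ × ℕ} (hβ : β ≠ 0) :
    ∑ α : Lam2 n, cvec n β α • (x ^ α.1.1 * y ^ α.1.2) =
      x ^ β.1 * ((1 + x) * (1 + y) - 1) ^ β.2.1 *
        ((1 + x) ^ n * (1 + y) ^ (n + 1) - 1) ^ β.2.2 := by
  have expand := map_mixedDiff (Fintype.linearCombination ℂ fun α : Lam2 n =>
    x ^ α.1.1 * y ^ α.1.2) β fun γ => vbar n (Amap n γ)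
  simp only [Fintype.linearCombination_apply, sum_vbar_smul hxy] at expand
  have split (φ : ℕ × ℕ × ℕ → S) : mixedDiff ℂ β (fun γ => φ γ - 1) = mixedDiff ℂ β φ := by
    rw [← sub_zero (mixedDiff ℂ β φ), ← mixedDiff_one (R := ℂ) hβ]
    simp only [mixedDiff, smul_sub, sum_sub_distrib]
  rw [cvec_eq_mixedDiff, expand, split]
  simp only [pow_Amap]
  rw [mixedDiff_pow (1 + x, (1 + x) * (1 + y), (1 + x) ^ n * (1 + y) ^ (n + 1)) β,
    add_sub_cancel_left]

theorem linearIndepOn_cvec_of_mk {I : Ideal S} (hx : x ∈ I) (hy : y ∈ I) {ι : Type*}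
    {s : Set ι} {β : ι → ℕ × ℕ × ℕ} (hβ : ∀ i ∈ s, β i ≠ 0)
    (hs : LinearIndepOn ℂ (fun i => Ideal.Quotient.mk (I ^ (n + 1))
      (x ^ (β i).1 * ((1 + x) ^ n * (1 + y) ^ (n + 1) - 1) ^ (β i).2.2 *
        ((1 + x) * (1 + y) - 1) ^ (β i).2.1)) s) :
    LinearIndepOn ℂ (cvec n ∘ β) s := by
  have nilpotent (i j : ℕ) (hij : n < i + j) :
      Ideal.Quotient.mk (I ^ (n + 1)) x ^ i * Ideal.Quotient.mk (I ^ (n + 1)) y ^ j = 0 := by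
    rw [← map_pow, ← map_pow, ← map_mul, Ideal.Quotient.eq_zero_iff_mem]
    refine Ideal.pow_le_pow_right hij ?_
    rw [pow_add]
    exact Ideal.mul_mem_mul (Ideal.pow_mem_pow hx i) (Ideal.pow_mem_pow hy j)
  refine .of_comp (Fintype.linearCombination ℂ fun α : Lam2 n =>
    Ideal.Quotient.mk (I ^ (n + 1)) x ^ α.1.1 * Ideal.Quotient.mk (I ^ (n + 1)) y ^ α.1.2) ?_
  refine (linearIndepOn_congr fun i hi => ?_).1 hs
  simp only [map_mul, map_pow, map_sub, map_add, map_one]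
  exact ((sum_cvec_smul nilpotent (hβ i hi)).trans (mul_right_comm _ _ _)).symm

end Expansion

theorem linearIndepOn_mk_iff {K R ι : Type*} [CommRing K] [CommRing R] [Algebra K R]
    {I : Ideal R} {f : ι → R} {s : Finset ι} :
    LinearIndepOn K (fun i => Ideal.Quotient.mk I (f i)) s ↔
      ∀ g : ι → K, ∑ i ∈ s, g i • f i ∈ I → ∀ i ∈ s, g i = 0 := by
  have hmk (g : ι → K) : ∑ i ∈ s, g i • Ideal.Quotient.mk I (f i) = 0 ↔ ∑ i ∈ s, g i • f i ∈ I := by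
    rw [← Ideal.Quotient.eq_zero_iff_mem, ← Ideal.Quotient.mkₐ_eq_mk K, map_sum]
    simp only [map_smul]
  simp only [linearIndepOn_finset_iff, hmk]

section Triangular

open Polynomial

variable {R : Type*} [CommRing R]

theorem pow_sub_dvd_coeff_of_mem_span_pow (a : R) {k : ℕ} {f : R[X]}
    (hf : f ∈ Ideal.span {C a, X} ^ k) (p : ℕ) : a ^ (k - p) ∣ f.coeff p := by
  induction k generalizing f p with
  | zero => simp
  | succ k ih =>
    rw [pow_succ'] at hf
    refine Submodule.mul_induction_on hf (fun g hg h hh => ?_) fun g h hg hh => ?_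
    · obtain ⟨u, w, rfl⟩ := Ideal.mem_span_pair.1 hg
      have expand : (u * C a + w * X) * h = C a * (u * h) + X * (w * h) := by ring
      rw [expand, coeff_add, coeff_C_mul]
      refine dvd_add ?_ ?_
      · refine (pow_dvd_pow a (show k + 1 - p ≤ k - p + 1 by omega)).trans ?_
        rw [pow_succ']
        exact mul_dvd_mul_left a (ih (Ideal.mul_mem_left _ u hh) p)
      · cases p with
        | zero => simp
        | succ p =>
          rw [coeff_X_mul, Nat.add_sub_add_right]
          exact ih (Ideal.mul_mem_left _ w hh) p
    · rw [coeff_add]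
      exact dvd_add hg hh

theorem linearIndepOn_mul_X_pow {K : Type*} [CommRing K] [Algebra K R] {a : R} {n : ℕ}
    {f : ℕ → R[X]}
    (hf : ∀ m ≤ n, LinearIndepOn K
      (fun i => Ideal.Quotient.mk (Ideal.span {a ^ (m + 1)}) ((f i).coeff 0)) (range (m + 1))) :
    LinearIndepOn K
      (fun ι : ℕ × ℕ => Ideal.Quotient.mk (Ideal.span {C a, X} ^ (n + 1)) (f ι.1 * X ^ ι.2))
      (insert 0 (Lam2 n) : Finset (ℕ × ℕ)) := by
  simp only [linearIndepOn_mk_iff, Ideal.mem_span_singleton] at hf ⊢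
  intro g hg
  suffices vanish : ∀ p i, i + p ≤ n → g (i, p) = 0 from
    fun ι hι => vanish ι.2 ι.1 (mem_insert_zero_Lam2.1 hι)
  intro p
  induction p using Nat.strong_induction_on with
  | _ p ih =>
  intro i hi
  refine hf (n - p) (by omega) (fun i => g (i, p)) ?_ i (mem_range.2 (by omega))
  have coeff_term : ∀ ι ∈ insert 0 (Lam2 n), (g ι • (f ι.1 * X ^ ι.2)).coeff p =
      if ι.2 = p then g ι • (f ι.1).coeff 0 else 0 := by
    rintro ⟨j, q⟩ hι
    rw [coeff_smul, coeff_mul_X_pow']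
    rcases lt_trichotomy q p with hq | rfl | hq
    · simp [ih q hq j (mem_insert_zero_Lam2.1 hι)]
    · simp
    · simp [hq.not_ge, hq.ne']
  have fibre : ∑ ι ∈ insert 0 (Lam2 n) with ι.2 = p, g ι • (f ι.1).coeff 0 =
      ∑ i ∈ range (n - p + 1), g (i, p) • (f i).coeff 0 := by
    rw [sum_finset_product_right _ {p} fun _ => range (n - p + 1), sum_singleton]
    rintro ⟨j, q⟩
    simp only [mem_filter, mem_insert_zero_Lam2, mem_singleton, mem_range]
    omega
  have hdvd := pow_sub_dvd_coeff_of_mem_span_pow a hg p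
  rwa [finsetSum_coeff, sum_congr rfl coeff_term, ← sum_filter, fibre,
    show n + 1 - p = n - p + 1 by omega] at hdvd

end Triangular

section Hook

open Polynomial

/-- The lattice points `(a, 0)` with `a ≤ A` and `(0, b)` with `b ≤ B`; the vectors
`v_{0,η} = 0, v_{1,η}, …, v_{m,η}` enumerate a hook with `A + B = m`. -/
def hook (A B : ℕ) : Finset (ℕ × ℕ) :=
  (range (A + 1)).image (fun a => (a, 0)) ∪ (range B).image (fun b => (0, b + 1))

theorem mem_hook {A B : ℕ} {u : ℕ × ℕ} :
    u ∈ hook A B ↔ u.2 = 0 ∧ u.1 ≤ A ∨ u.1 = 0 ∧ u.2 ≤ B := by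
  obtain ⟨_ | a, _ | b⟩ := u <;> simp [hook]

theorem sum_hook {M : Type*} [AddCommMonoid M] (A B : ℕ) (F : ℕ × ℕ → M) :
    ∑ u ∈ hook A B, F u = ∑ a ∈ range (A + 1), F (a, 0) + ∑ b ∈ range B, F (0, b + 1) := by
  rw [hook, sum_union, sum_image, sum_image]
  · simp [Set.InjOn]
  · simp [Set.InjOn]
  · simp [disjoint_left]

theorem card_hook (A B : ℕ) : #(hook A B) = A + B + 1 := by
  rw [card_eq_sum_ones, sum_hook]
  simp only [sum_const, card_range, smul_eq_mul, mul_one]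
  omega

variable {R : Type*} [CommRing R]

theorem eq_zero_of_X_pow_dvd_coe {q : R[X]} {N : ℕ} (hq : q.natDegree < N)
    (h : (PowerSeries.X : R⟦X⟧) ^ N ∣ q) : q = 0 := by
  ext k
  rcases lt_or_ge k N with hk | hk
  · simpa using PowerSeries.X_pow_dvd_iff.1 h k hk
  · exact coeff_eq_zero_of_natDegree_lt (hq.trans_le hk)

/-- The numerator of `p + Σ_{b < B} g_b (-X / (1 + X))^{b+1}` over the denominator
`(1 + X)^B`. -/
noncomputable def partialFractionsNumerator (p : R[X]) (g : ℕ → R) (B : ℕ) : R[X] :=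
  p * (1 + X) ^ B + ∑ b ∈ range B, C (g b) * ((-X) ^ (b + 1) * (1 + X) ^ (B - (b + 1)))

theorem natDegree_partialFractionsNumerator_le {p : R[X]} {A : ℕ} (hp : p.natDegree ≤ A)
    (g : ℕ → R) (B : ℕ) :
    (partialFractionsNumerator p g B).natDegree ≤ A + B := by
  refine natDegree_add_le_of_degree_le (natDegree_mul_le_of_le hp (by compute_degree)) ?_
  refine natDegree_sum_le_of_forall_le _ _ fun b hb => ?_
  have hb : b + 1 + (B - (b + 1)) ≤ A + B := by
    have := mem_range.1 hb
    omega
  refine le_trans ?_ hb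
  compute_degree

theorem coe_partialFractionsNumerator {z : R⟦X⟧}
    (hz : (1 + PowerSeries.X) * z = -PowerSeries.X) (p : R[X]) (g : ℕ → R) (B : ℕ) :
    ((partialFractionsNumerator p g B : R[X]) : R⟦X⟧) =
      (1 + PowerSeries.X) ^ B * ((p : R⟦X⟧) + ∑ b ∈ range B, g b • z ^ (b + 1)) := by
  rw [partialFractionsNumerator, mul_add, mul_comm ((1 + PowerSeries.X) ^ B), mul_sum]
  simp only [← coeToPowerSeries.ringHom_apply, map_add, map_sum, map_mul, map_pow, map_neg,
    map_one]
  simp only [coeToPowerSeries.ringHom_apply, coe_C, coe_X, PowerSeries.smul_eq_C_mul]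
  refine congrArg _ (sum_congr rfl fun b hb => ?_)
  obtain ⟨k, rfl⟩ := Nat.exists_eq_add_of_le (show b + 1 ≤ B from mem_range.1 hb)
  rw [← hz, Nat.add_sub_cancel_left, mul_pow]
  ring

-- The coefficient of the highest pole is read off at `X = -1`; then `1 + X` divides out.
theorem partialFractions_eq_zero {p : R[X]} {g : ℕ → R} {B : ℕ}
    (h : partialFractionsNumerator p g B = 0) : p = 0 ∧ ∀ b < B, g b = 0 := by
  unfold partialFractionsNumerator at h
  induction B with
  | zero => simpa using h
  | succ B ih =>
    have factor : ∑ b ∈ range B, C (g b) * ((-X) ^ (b + 1) * (1 + X) ^ (B + 1 - (b + 1))) =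
        (1 + X) * ∑ b ∈ range B, C (g b) * ((-X) ^ (b + 1) * (1 + X) ^ (B - (b + 1))) := by
      rw [mul_sum]
      refine sum_congr rfl fun b hb => ?_
      rw [Nat.sub_add_comm (mem_range.1 hb), pow_succ]
      ring
    rw [sum_range_succ, factor] at h
    have last : g B = 0 := by simpa using congrArg (eval (-1)) h
    have regular : IsLeftRegular (1 + X : R[X]) := by
      rw [add_comm, ← C_1]
      exact (monic_X_add_C 1).isRegular.left
    obtain ⟨hp, hg⟩ := ih <| regular <| by
      simp only [last, map_zero, zero_mul, add_zero, mul_zero] at h ⊢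
      linear_combination h
    exact ⟨hp, fun b hb => (Nat.lt_succ_iff_lt_or_eq.1 hb).elim (hg b) fun hb => hb ▸ last⟩

theorem linearIndepOn_hook {z : R⟦X⟧} (hz : (1 + PowerSeries.X) * z = -PowerSeries.X) (A B : ℕ) :
    LinearIndepOn R (fun u : ℕ × ℕ => Ideal.Quotient.mk (Ideal.span {PowerSeries.X ^ (A + B + 1)})
      (PowerSeries.X ^ u.1 * z ^ u.2)) (hook A B) := by
  simp only [linearIndepOn_mk_iff, Ideal.mem_span_singleton]
  intro g hg
  rw [sum_hook] at hg
  set p : R[X] := ∑ a ∈ range (A + 1), C (g (a, 0)) * X ^ a with hp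
  have natDegree_p : p.natDegree ≤ A := natDegree_sum_le_of_forall_le _ _ fun a ha =>
    (natDegree_C_mul_X_pow_le _ _).trans (mem_range_succ_iff.1 ha)
  have numerator_eq_zero : partialFractionsNumerator p (fun b => g (0, b + 1)) B = 0 := by
    refine eq_zero_of_X_pow_dvd_coe (N := A + B + 1)
      (Nat.lt_succ_of_le (natDegree_partialFractionsNumerator_le natDegree_p _ B)) ?_
    have coe_p : (p : R⟦X⟧) = ∑ a ∈ range (A + 1), g (a, 0) • PowerSeries.X ^ a := by
      simp only [hp, ← coeToPowerSeries.ringHom_apply, map_sum, map_mul, map_pow]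
      simp [PowerSeries.smul_eq_C_mul]
    rw [coe_partialFractionsNumerator hz p, coe_p]
    simpa using hg.mul_left _
  obtain ⟨hp0, hg0⟩ := partialFractions_eq_zero numerator_eq_zero
  have horizontal : ∀ a ≤ A, g (a, 0) = 0 := fun a ha => by
    simpa [hp, finsetSum_coeff, Nat.lt_succ_iff, ha] using congrArg (coeff · a) hp0
  rintro ⟨a, b⟩ hu
  rcases mem_hook.1 hu with ⟨rfl, ha⟩ | ⟨rfl, hb⟩
  · exact horizontal a ha
  · cases b with
    | zero => exact horizontal 0 A.zero_le
    | succ b => exact hg0 b hb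

end Hook

section Staircase

open Polynomial

variable (h : ℕ → Prop) [DecidablePred h]

/-- The end points of the successive arms of hooks growing according to the two-letter word `h`:
the `(i+1)`-st step lengthens the horizontal arm if `h i` holds and the vertical arm otherwise.
For the word of `η ∈ Ω` these are the vectors `v_{j,η}`. -/
def stairVec : ℕ → ℕ × ℕ
  | 0 => 0
  | i + 1 => if h i then (Nat.count h i + 1, 0) else (0, Nat.count (¬ h ·) i + 1)

theorem count_add_count_not (m : ℕ) : Nat.count h m + Nat.count (¬ h ·) m = m := by
  simp only [Nat.count_eq_card_filter_range]
  rw [card_filter_add_card_filter_not, card_range]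

theorem image_stairVec (m : ℕ) :
    (range (m + 1)).image (stairVec h) = hook (Nat.count h m) (Nat.count (¬ h ·) m) := by
  induction m with
  | zero =>
    ext ⟨a, b⟩
    simp [stairVec, hook, ← Prod.mk_zero_zero]
  | succ m ih =>
    rw [range_add_one, image_insert, ih]
    ext ⟨a, b⟩
    simp only [mem_insert, mem_hook, stairVec, Nat.count_succ]
    by_cases hm : h m <;> simp [hm] <;> omega

theorem stairVec_injOn (m : ℕ) : Set.InjOn (stairVec h) (range (m + 1)) := by
  apply injOn_of_card_image_eq
  rw [image_stairVec, card_hook, count_add_count_not, card_range]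

theorem stairVec_sum_le (i : ℕ) : (stairVec h i).1 + (stairVec h i).2 ≤ i := by
  cases i with
  | zero => simp [stairVec]
  | succ i =>
    have := count_add_count_not h i
    simp only [stairVec]
    split_ifs <;> dsimp only <;> omega

theorem stairVec_sum_pos {i : ℕ} (hi : i ≠ 0) : 0 < (stairVec h i).1 + (stairVec h i).2 := by
  obtain ⟨i, rfl⟩ := Nat.exists_eq_succ_of_ne_zero hi
  simp only [stairVec]
  split_ifs <;> simp

/-- The multi-index in `Λ_{3,n}` attached to `(i, p) ∈ Λ_{2,n}`; its image under `A_n` is the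
`p`-th point of the translate of `T_i`. -/
def stairIndex (ι : ℕ × ℕ) : ℕ × ℕ × ℕ :=
  ((stairVec h ι.1).1, ι.2, (stairVec h ι.1).2)

theorem stairIndex_mem_Lam3 {n : ℕ} {ι : ℕ × ℕ} (hι : ι ∈ Lam2 n) : stairIndex h ι ∈ Lam3 n := by
  obtain ⟨i, p⟩ := ι
  simp only [mem_Lam2, mem_Lam3, stairIndex] at hι ⊢
  have hle := stairVec_sum_le h i
  have hpos : i ≠ 0 → 0 < _ := stairVec_sum_pos h
  omega

theorem linearIndepOn_stairVec {R : Type*} [CommRing R] {z : R⟦X⟧}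
    (hz : (1 + PowerSeries.X) * z = -PowerSeries.X) (m : ℕ) :
    LinearIndepOn R (fun i => Ideal.Quotient.mk (Ideal.span {PowerSeries.X ^ (m + 1)})
      (PowerSeries.X ^ (stairVec h i).1 * z ^ (stairVec h i).2)) (range (m + 1)) := by
  have hhook := linearIndepOn_hook hz (Nat.count h m) (Nat.count (¬ h ·) m)
  rw [← image_stairVec, count_add_count_not, coe_image] at hhook
  exact hhook.comp_of_image (stairVec_injOn h m)

theorem linearIndepOn_stairVec_mul_X_pow {R : Type*} [CommRing R] {Z : R⟦X⟧[X]}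
    (hZ : (1 + PowerSeries.X) * Z.coeff 0 = -PowerSeries.X) (n : ℕ) :
    LinearIndepOn R
      (fun ι : ℕ × ℕ => Ideal.Quotient.mk (Ideal.span {C PowerSeries.X, X} ^ (n + 1))
        (C PowerSeries.X ^ (stairVec h ι.1).1 * Z ^ (stairVec h ι.1).2 * X ^ ι.2))
      (insert 0 (Lam2 n) : Finset (ℕ × ℕ)) := by
  refine linearIndepOn_mul_X_pow
    (f := fun i => C PowerSeries.X ^ (stairVec h i).1 * Z ^ (stairVec h i).2) fun m _ => ?_
  simpa only [coeff_zero_eq_eval_zero, eval_mul, eval_pow, eval_C] using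
    linearIndepOn_stairVec h hZ m

theorem linearIndepOn_cvec_stairIndex (n : ℕ) :
    LinearIndepOn ℂ (cvec n ∘ stairIndex h) (Lam2 n) := by
  obtain ⟨s, hs⟩ : ∃ s : ℂ⟦X⟧, (1 + PowerSeries.X) * s = 1 :=
    ⟨(1 + PowerSeries.X)⁻¹, PowerSeries.mul_inv_cancel _ (by simp)⟩
  set x : ℂ⟦X⟧[X] := C PowerSeries.X with hx
  set y : ℂ⟦X⟧[X] := (1 + X) * C s - 1 with hy
  set Z : ℂ⟦X⟧[X] := (1 + x) ^ n * (1 + y) ^ (n + 1) - 1 with hZ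
  set I : Ideal ℂ⟦X⟧[X] := Ideal.span {x, X}
  have hxs : (1 + x) * C s = 1 := by
    rw [hx, ← C_1, ← C_add, ← C_mul, hs]
  have hX : (1 + x) * (1 + y) - 1 = X := by
    linear_combination (1 + X) * hxs
  have hZ₀ : (1 + PowerSeries.X) * Z.coeff 0 = -PowerSeries.X := by
    have : Z.coeff 0 = s - 1 := by
      have e : (1 + PowerSeries.X) ^ n * s ^ (n + 1) = s := by
        rw [pow_succ, ← mul_assoc, ← mul_pow, hs, one_pow, one_mul]
      simp [hZ, hx, hy, coeff_zero_eq_eval_zero, e]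
    rw [this]
    linear_combination hs
  have hxI : x ∈ I := Ideal.subset_span (by simp)
  have hyI : y ∈ I := Ideal.mem_span_pair.2 ⟨-C s, C s, by linear_combination -hxs⟩
  refine linearIndepOn_cvec_of_mk hxI hyI (fun ι hι h₀ => ?_) ?_
  · simpa [h₀, mem_Lam3] using stairIndex_mem_Lam3 h hι
  · rw [hX, ← hZ]
    exact (linearIndepOn_stairVec_mul_X_pow h hZ₀ n).mono (coe_subset.2 (subset_insert _ _))

end Staircase

section Word

variable {n : ℕ} {η : OmegaData}

/-- The two-letter word of `η`: step `i` is to the right if `i + 1` lies in a block `d_t` that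
contributes points `(a, 0)`, i.e. `z = 1` and `t` is odd, or `z = 0` and `t` is even. -/
def OmegaData.IsRightStep (η : OmegaData) (i : ℕ) : Prop :=
  η.z = true ↔ Odd (tIdx η (i + 1))

noncomputable instance (η : OmegaData) : DecidablePred η.IsRightStep :=
  fun _ => inferInstanceAs (Decidable (_ ↔ _))

theorem tIdx_eq {j t : ℕ} (h₁ : ∑ i ∈ range t, η.d i < j) (h₂ : j ≤ ∑ i ∈ range (t + 1), η.d i) :
    tIdx η j = t := by
  refine le_antisymm (Nat.sInf_le h₂) (not_lt.1 fun hlt => ?_)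
  have hmem : j ≤ ∑ i ∈ range (tIdx η j + 1), η.d i :=
    Nat.sInf_mem (s := {t | j ≤ ∑ i ∈ range (t + 1), η.d i}) ⟨t, h₂⟩
  exact (h₁.trans_le hmem).not_ge (sum_le_sum_of_subset (range_mono hlt))

theorem sum_tIdx_lt {j : ℕ} (hj : 0 < j) : ∑ i ∈ range (tIdx η j), η.d i < j := by
  cases ht : tIdx η j with
  | zero => simpa using hj
  | succ t =>
    exact not_le.1 (Nat.notMem_of_lt_sInf (s := {t | j ≤ ∑ i ∈ range (t + 1), η.d i})
      (t.lt_succ_self.trans_eq ht.symm))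

theorem le_sum_tIdx {j k : ℕ} (hj : j ≤ ∑ i ∈ range (k + 1), η.d i) :
    j ≤ ∑ i ∈ range (tIdx η j + 1), η.d i :=
  Nat.sInf_mem (s := {t | j ≤ ∑ i ∈ range (t + 1), η.d i}) ⟨k, hj⟩

theorem count_tIdx_block (p : ℕ → Prop) [DecidablePred p] {t c : ℕ} (hc : c ≤ η.d t) :
    Nat.count (fun i => p (tIdx η (∑ l ∈ range t, η.d l + i + 1))) c = if p t then c else 0 := by
  have ht : ∀ i < c, tIdx η (∑ l ∈ range t, η.d l + i + 1) = t := fun i hi =>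
    tIdx_eq (by omega) (by rw [sum_range_succ]; omega)
  split_ifs with hp
  · exact Nat.count_of_forall fun _ hi => (ht _ hi).symm ▸ hp
  · exact Nat.count_of_forall_not fun _ hi => (ht _ hi).symm ▸ hp

theorem count_tIdx (p : ℕ → Prop) [DecidablePred p] {t c : ℕ} (hc : c ≤ η.d t) :
    Nat.count (fun i => p (tIdx η (i + 1))) (∑ l ∈ range t, η.d l + c) =
      (∑ l ∈ range t, if p l then η.d l else 0) + if p t then c else 0 := by
  rw [Nat.count_add, count_tIdx_block p hc]
  congr 1
  clear hc
  induction t with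
  | zero => simp
  | succ t ih => rw [sum_range_succ, Nat.count_add, ih, count_tIdx_block p le_rfl, sum_range_succ]

theorem vvec_eq_stairVec {j k : ℕ} (hj : j ≤ ∑ i ∈ range (k + 1), η.d i) :
    vvec η j = stairVec η.IsRightStep j := by
  cases j with
  | zero =>
    have : tIdx η 0 = 0 := Nat.sInf_eq_zero.2 (Or.inl (Nat.zero_le _))
    simp [vvec, stairVec, this]
  | succ i =>
    have hlt := sum_tIdx_lt (η := η) i.succ_pos
    have hle := le_sum_tIdx hj
    obtain ⟨t, ht⟩ : ∃ t, tIdx η (i + 1) = t := ⟨_, rfl⟩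
    rw [ht] at hlt hle
    obtain ⟨c, rfl⟩ := Nat.exists_eq_add_of_le (Nat.lt_succ_iff.1 hlt)
    have hc : c ≤ η.d t := by
      rw [sum_range_succ] at hle
      omega
    have hsub : ∑ l ∈ range t, η.d l + c + 1 - ∑ l ∈ range t, η.d l = c + 1 := by omega
    have count_right : Nat.count η.IsRightStep (∑ l ∈ range t, η.d l + c) = _ :=
      count_tIdx (fun l => η.z = true ↔ Odd l) hc
    have count_up : Nat.count (¬ η.IsRightStep ·) (∑ l ∈ range t, η.d l + c) = _ :=
      count_tIdx (fun l => ¬(η.z = true ↔ Odd l)) hc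
    have step : η.IsRightStep (∑ l ∈ range t, η.d l + c) ↔ (η.z = true ↔ Odd t) := by
      rw [OmegaData.IsRightStep, ht]
    simp only [vvec, stairVec, count_right, count_up, step, ht, hsub]
    by_cases h : η.z = true ↔ Odd t
    · have same (l : ℕ) : (η.z = true ↔ Odd l) ↔ (Odd l ↔ Odd t) := by tauto
      simp only [same, if_true, add_assoc]
    · have same (l : ℕ) : ¬(η.z = true ↔ Odd l) ↔ (Odd l ↔ Odd t) := by tauto
      simp only [if_neg h, same, if_true, add_assoc]

theorem image_Amap_image_stairIndex {h : ℕ → Prop} [DecidablePred h]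
    (hv : ∀ j ≤ n, vvec η j = stairVec h j) :
    ((Lam2 n).image (stairIndex h)).image (Amap n) = Tset' n η := by
  have split : Lam2 n = (range n).image (fun q => (0, q + 1)) ∪
      (Icc 1 n).biUnion fun i => (range (n - i + 1)).image fun p => (i, p) := by
    ext ⟨i, p⟩
    simp only [mem_Lam2, mem_union, mem_image, mem_biUnion, mem_range, mem_Icc, Prod.mk.injEq,
      ← and_assoc, exists_eq_right]
    refine ⟨fun hι => ?_, by rintro (⟨q, hq⟩ | hι) <;> omega⟩
    rcases Nat.eq_zero_or_pos i with rfl | hi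
    · exact Or.inl ⟨p - 1, by omega⟩
    · exact Or.inr (by omega)
  rw [split, image_image, image_union, image_image, biUnion_image, Tset']
  congr 1
  · refine image_congr fun q _ => ?_
    simp [stairIndex, stairVec, Amap]
  · refine biUnion_congr rfl fun i hi => ?_
    obtain ⟨hi₀, hi₁⟩ := mem_Icc.1 hi
    rw [Tj, if_neg (by omega), image_image, image_image]
    refine image_congr fun p _ => ?_
    simp only [Function.comp_apply, Amap, stairIndex, rshift, hv i hi₁, Prod.ext_iff, Prod.fst_add,
      Prod.snd_add, true_and]
    ring

end Word

theorem memSA_of_linearIndepOn {n : ℕ} {J : Finset (ℕ × ℕ × ℕ)} (hJ : J ⊆ Lam3 n)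
    (hcard : #J = #(Lam2 n)) (h : LinearIndepOn ℂ (cvec n) J) : memSA n J := by
  refine ⟨hJ, hcard, fun e => ?_⟩
  rw [← isUnit_iff_ne_zero, ← Matrix.isUnit_iff_isUnit_det,
    ← Matrix.linearIndependent_rows_iff_isUnit]
  exact h.comp _ e.injective

theorem stmt3 (n : ℕ) (hn : 1 ≤ n) (η : OmegaData) (hη : η.IsOmega n) :
    (∃! J : Finset (ℕ × ℕ × ℕ), J ⊆ Lam3 n ∧ J.image (Amap n) = Tset' n η) ∧
    (∀ J : Finset (ℕ × ℕ × ℕ), J ⊆ Lam3 n → J.image (Amap n) = Tset' n η →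
      J.card = (Lam2 n).card ∧ memSA n J) := by
  set Jη := (Lam2 n).image (stairIndex η.IsRightStep) with hJη
  have subset : Jη ⊆ Lam3 n := image_subset_iff.2 fun _ => stairIndex_mem_Lam3 _
  have image_eq : Jη.image (Amap n) = Tset' n η :=
    image_Amap_image_stairIndex fun j hj => vvec_eq_stairVec (hj.trans_eq hη.2.2.2.symm)
  have unique (J : Finset (ℕ × ℕ × ℕ)) (hJ : J ⊆ Lam3 n) (e : J.image (Amap n) = Tset' n η) :
      J = Jη :=
    (image_eq_image_iff_of_injOn (Amap_injOn n) hJ subset).1 (e.trans image_eq.symm)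
  have indep := linearIndepOn_cvec_stairIndex η.IsRightStep n
  have card_eq : #Jη = #(Lam2 n) := card_image_of_injOn (Set.InjOn.of_comp indep.injOn)
  have mem : memSA n Jη := memSA_of_linearIndepOn subset card_eq <| by
    rw [hJη, coe_image]
    exact indep.image_of_comp
  refine ⟨⟨Jη, ⟨subset, image_eq⟩, fun J hJ => unique J hJ.1 hJ.2⟩, fun J hJ e => ?_⟩
  rw [unique J hJ e]
  exact ⟨card_eq, mem⟩
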